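/- Let 𝔤 = 𝔰𝔩(n,ℂ) (n ≥ 2) be the special linear Lie algebra of traceless n×n complex matrices, and let e be a nilpotent element of 𝔤. Then ind 𝔫(𝔤^e) = rk 𝔤 − dim 𝔷(𝔤^e), where 𝔤^e is the centralizer of e in 𝔤, 𝔫(𝔤^e) its normalizer in 𝔤, and 𝔷(𝔤^e) the centre of 𝔤^e. -/

import Mathlib

open scoped ComplexOrder

/-- The centralizer `𝔤^e = {x ∈ 𝔤 : ⁅x, e⁆ = 0}` of an element `e`, as a Lie subalgebra. -/
def centralizer (L : Type*) [LieRing L] [LieAlgebra ℂ L] (e : L) : LieSubalgebra ℂ L where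
  carrier := {x : L | ⁅x, e⁆ = 0}
  add_mem' := fun {a b} ha hb => by
    simp only [Set.mem_setOf_eq] at *
    rw [add_lie, ha, hb, add_zero]
  zero_mem' := by simp
  smul_mem' := fun c a ha => by
    simp only [Set.mem_setOf_eq] at *
    rw [smul_lie, ha, smul_zero]
  lie_mem' := fun {a b} ha hb => by
    simp only [Set.mem_setOf_eq] at *
    simp [lie_lie, ha, hb]

/-- Membership in the centre `𝔷(𝔤^e)` of the centralizer of `e`:
`v` centralizes `e` and commutes with every element of `𝔤^e`. -/
def InCenterOfCentralizer (L : Type*) [LieRing L] [LieAlgebra ℂ L] (e v : L) : Prop :=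
  ⁅v, e⁆ = 0 ∧ ∀ y : L, ⁅y, e⁆ = 0 → ⁅v, y⁆ = 0

/-- The centre `𝔷(𝔤^e)` of the centralizer of `e`, as a subspace of `L`. -/
def zCenter (L : Type*) [LieRing L] [LieAlgebra ℂ L] (e : L) : Submodule ℂ L where
  carrier := {v : L | ⁅v, e⁆ = 0 ∧ ∀ y : L, ⁅y, e⁆ = 0 → ⁅v, y⁆ = 0}
  add_mem' := fun {a b} ha hb => ⟨by rw [add_lie, ha.1, hb.1, add_zero],
    fun y hy => by rw [add_lie, ha.2 y hy, hb.2 y hy, add_zero]⟩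
  zero_mem' := ⟨zero_lie e, fun y _ => zero_lie y⟩
  smul_mem' := fun c a ha => ⟨by rw [smul_lie, ha.1, smul_zero],
    fun y hy => by rw [smul_lie, ha.2 y hy, smul_zero]⟩

/-- Property (P) for an `sl₂`-triple `(e, h, f)`: for every nonzero `v ∈ 𝔷(𝔤^e)`, the
eigenspace `𝔷_max` of the restriction of `ad h` to `𝔷(𝔤^e)` for its largest eigenvalue is
contained in `[[f, 𝔤^e], v] = {⁅⁅f, x⁆, v⁆ : x ∈ 𝔤^e}`. -/
def PropertyP (L : Type*) [LieRing L] [LieAlgebra ℂ L] (e h f : L) : Prop :=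
  ∀ m : ℂ,
    (∃ z : L, z ≠ 0 ∧ InCenterOfCentralizer L e z ∧ ⁅h, z⁆ = m • z) →
    (∀ m' : ℂ, (∃ z : L, z ≠ 0 ∧ InCenterOfCentralizer L e z ∧ ⁅h, z⁆ = m' • z) → m' ≤ m) →
    ∀ v : L, InCenterOfCentralizer L e v → v ≠ 0 →
      ∀ z : L, InCenterOfCentralizer L e z → ⁅h, z⁆ = m • z →
        ∃ x : L, ⁅x, e⁆ = 0 ∧ ⁅⁅f, x⁆, v⁆ = z

/-- The stabilizer `{x ∈ 𝔮 : ξ(⁅x, y⁆) = 0 for all y ∈ 𝔮}` of a linear functional `ξ`. -/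
def coadStab (Q : Type*) [LieRing Q] [LieAlgebra ℂ Q] (ξ : Module.Dual ℂ Q) : Submodule ℂ Q where
  carrier := {x : Q | ∀ y : Q, ξ ⁅x, y⁆ = 0}
  add_mem' := fun {a b} ha hb y => by rw [add_lie, map_add, ha y, hb y, add_zero]
  zero_mem' := fun y => by rw [zero_lie, map_zero]
  smul_mem' := fun c a ha y => by rw [smul_lie, map_smul, ha y, smul_zero]

/-- The index of a complex Lie algebra:
`ind 𝔮 = min_{ξ ∈ 𝔮*} dim {x ∈ 𝔮 : ξ(⁅x, y⁆) = 0 for all y ∈ 𝔮}`. -/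
noncomputable def lieIndex (Q : Type*) [LieRing Q] [LieAlgebra ℂ Q] : ℕ :=
  ⨅ ξ : Module.Dual ℂ Q, Module.finrank ℂ ↥(coadStab Q ξ)

/-- A nilpotent element `e` is distinguished if the only `x ∈ 𝔤^e` such that `ad x` is a
semisimple endomorphism of `𝔤` is `x = 0`. -/
def IsDistinguished (L : Type*) [LieRing L] [LieAlgebra ℂ L] (e : L) : Prop :=
  ∀ x : L, ⁅x, e⁆ = 0 → (LieAlgebra.ad ℂ L x).IsSemisimple → x = 0

/-- A decomposition of a space into Jordan chains `w i 0, w i 1, …, w i (k i - 1)` of `e`, with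
the dual coordinates `l`. -/
structure JordanChains {V : Type} [AddCommGroup V] [Module ℂ V] (e : Module.End ℂ V) where
  d : ℕ
  k : Fin d → ℕ
  w : Fin d → ℕ → V
  l : Fin d → ℕ → Module.Dual ℂ V
  apply_w : ∀ i s, e (w i s) = w i (s + 1)
  w_eq_zero : ∀ i s, k i ≤ s → w i s = 0
  l_w : ∀ i s j t, l j t (w i s) = if i = j ∧ s = t ∧ s < k i then 1 else 0
  eq_sum : ∀ x, x = ∑ i, ∑ s ∈ Finset.range (k i), l i s x • w i s

open Polynomial in
theorem JordanChains.nonempty {V : Type} [AddCommGroup V] [Module ℂ V] [FiniteDimensional ℂ V]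
    (e : Module.End ℂ V) (he : IsNilpotent e) : Nonempty (JordanChains e) := by
  classical
  have htors : Module.IsTorsion' (Module.AEval' e) (Submonoid.powers (X : ℂ[X])) := by
    obtain ⟨N, hN⟩ := he
    intro x
    refine ⟨⟨X ^ N, N, rfl⟩, ?_⟩
    obtain ⟨v, rfl⟩ := (Module.AEval'.of e).surjective x
    change (X ^ N : ℂ[X]) • Module.AEval'.of e v = 0
    rw [Module.AEval'.X_pow_smul_of, hN, zero_smul, map_zero]
  obtain ⟨d, k, ⟨E⟩⟩ := Module.torsion_by_prime_power_decomposition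
    (R := ℂ[X]) (M := Module.AEval' e) (p := X) irreducible_X htors
  let mk (i : Fin d) : ℂ[X] →ₗ[ℂ[X]] ℂ[X] ⧸ Submodule.span ℂ[X] {(X : ℂ[X]) ^ k i} :=
    Submodule.mkQ _
  let c (i : Fin d) : (ℂ[X] ⧸ Submodule.span ℂ[X] {(X : ℂ[X]) ^ k i}) →ₗ[ℂ] ℂ[X] :=
    AdjoinRoot.modByMonicHom (monic_X_pow (k i))
  have hc (i : Fin d) (p : ℂ[X]) : c i (mk i p) = p %ₘ X ^ k i :=
    AdjoinRoot.modByMonicHom_mk (monic_X_pow (k i)) p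
  have hmc (i : Fin d) (y) : mk i (c i y) = y :=
    AdjoinRoot.mk_leftInverse (monic_X_pow (k i)) y
  have hmk (i : Fin d) (s : ℕ) (hs : k i ≤ s) : mk i (X ^ s) = 0 :=
    (Submodule.Quotient.mk_eq_zero _).2 (Submodule.mem_span_singleton.2
      ⟨X ^ (s - k i), by rw [smul_eq_mul, ← pow_add, Nat.sub_add_cancel hs]⟩)
  have hE (i : Fin d) (s : ℕ) : e ((Module.AEval'.of e).symm
      (E.symm (DirectSum.lof ℂ[X] (Fin d) _ i (mk i (X ^ s))))) =
      (Module.AEval'.of e).symm (E.symm (DirectSum.lof ℂ[X] (Fin d) _ i (mk i (X ^ (s + 1))))) := by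
    rw [← Module.AEval'.of_symm_X_smul, ← map_smul, ← map_smul, ← map_smul, smul_eq_mul, pow_succ']
  refine ⟨⟨d, k, fun i s => (Module.AEval'.of e).symm
      (E.symm (DirectSum.lof ℂ[X] (Fin d) _ i (mk i (X ^ s)))),
    fun j t => (lcoeff ℂ t).comp ((c j).comp
      ((DirectSum.component ℂ (Fin d) _ j).comp ((E.restrictScalars ℂ).toLinearMap.comp
        (Module.AEval'.of e).toLinearMap))), hE, ?_, ?_, ?_⟩⟩
  · intro i s hs
    simp only [hmk i s hs, map_zero]
  · intro i s j t
    simp only [LinearMap.comp_apply, LinearEquiv.coe_coe, LinearEquiv.apply_symm_apply,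
      LinearEquiv.restrictScalars_apply, lcoeff_apply]
    by_cases hij : i = j
    · subst hij
      have : DirectSum.component ℂ (Fin d) (fun i => ℂ[X] ⧸ Submodule.span ℂ[X]
          {(X : ℂ[X]) ^ k i}) i (DirectSum.lof ℂ[X] (Fin d) _ i (mk i (X ^ s))) = mk i (X ^ s) :=
        DirectSum.component.lof_self ℂ[X] _ _
      rw [this]
      by_cases hs : s < k i
      · have h2 : (X : ℂ[X]) ^ s %ₘ X ^ k i = X ^ s := by
          rw [modByMonic_eq_self_iff (monic_X_pow _), degree_X_pow, degree_X_pow]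
          exact_mod_cast hs
        rw [hc, h2, coeff_X_pow]
        simp [hs, eq_comm]
      · simp [hs, hmk i s (not_lt.1 hs)]
    · have : DirectSum.component ℂ (Fin d) (fun i => ℂ[X] ⧸ Submodule.span ℂ[X]
          {(X : ℂ[X]) ^ k i}) j (DirectSum.lof ℂ[X] (Fin d) _ i (mk i (X ^ s))) = 0 :=
        (DirectSum.component.of _ _ _ _).trans (dif_neg hij)
      simp [hij, this]
  · intro x
    apply (Module.AEval'.of e).injective
    apply E.injective
    simp only [map_sum, map_smul, LinearMap.comp_apply, LinearEquiv.coe_coe,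
      LinearEquiv.apply_symm_apply, LinearEquiv.restrictScalars_apply, lcoeff_apply]
    generalize E (Module.AEval'.of e x) = z
    have hz (i : Fin d) : ∑ s ∈ Finset.range (k i),
        (c i (DirectSum.component ℂ (Fin d) _ i z)).coeff s • DirectSum.lof ℂ[X] (Fin d)
          (fun i => ℂ[X] ⧸ Submodule.span ℂ[X] {(X : ℂ[X]) ^ k i}) i (mk i (X ^ s)) =
        DirectSum.of _ i (z i) := by
      have hy (y : ℂ[X] ⧸ Submodule.span ℂ[X] {(X : ℂ[X]) ^ k i}) :
          mk i (∑ s ∈ Finset.range (k i), (c i y).coeff s • X ^ s) = y := by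
        conv_rhs => rw [← hmc i y]
        congr 1
        obtain ⟨p, rfl⟩ := Submodule.mkQ_surjective _ y
        have hdeg : (c i (mk i p)).degree < (k i : ℕ) := by
          rw [hc]
          exact (degree_modByMonic_lt _ (monic_X_pow (k i))).trans_eq (degree_X_pow _)
        ext t
        simp only [finsetSum_coeff, coeff_smul, coeff_X_pow, smul_eq_mul, mul_ite, mul_one,
          mul_zero, Finset.sum_ite_eq, Finset.mem_range, ite_eq_left_iff, not_lt]
        exact fun ht => (coeff_eq_zero_of_degree_lt (hdeg.trans_le (by exact_mod_cast ht))).symm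
      simp only [← LinearMap.map_smul_of_tower, ← map_sum]
      rw [hy]
      rfl
    have hsm (a : ℂ) (y) : E (a • E.symm y) = a • y := by
      exact ((E.restrictScalars ℂ).map_smul a _).trans (by simp)
    simp only [hsm]
    exact ((Finset.sum_congr rfl fun i _ => hz i).trans (DirectSum.sum_univ_of z)).symm

open Polynomial in
theorem le_finrank_centralizer {V : Type} [AddCommGroup V] [Module ℂ V] [FiniteDimensional ℂ V]
    (e : Module.End ℂ V) :
    Module.finrank ℂ V ≤ Module.finrank ℂ
      (LinearMap.ker (LinearMap.mulLeft ℂ e - LinearMap.mulRight ℂ e)) := by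
  classical
  obtain ⟨ι, _, p, hp, k, ⟨E⟩⟩ := Module.equiv_directSum_of_isTorsion
    (R := Polynomial ℂ) (M := Module.AEval' e) (Module.AEval.isTorsion_of_finiteDimensional ..)
  let S := Π i, (Polynomial ℂ ⧸ Ideal.span {p i ^ k i})
  let E' : Module.AEval' e ≃ₗ[Polynomial ℂ] S := E.trans (DirectSum.linearEquivFunOnFintype _ _ _)
  let G : V ≃ₗ[ℂ] S := (Module.AEval'.of e).trans (E'.restrictScalars ℂ)
  have hG (v : V) : G (e v) = (X : ℂ[X]) • G v := by
    change E' (Module.AEval'.of e (e v)) = (X : ℂ[X]) • E' (Module.AEval'.of e v)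
    rw [← Module.AEval'.X_smul_of, map_smul]
  have hG' (s : S) : e (G.symm s) = G.symm ((X : ℂ[X]) • s) := by
    apply G.injective
    rw [hG, G.apply_symm_apply, G.apply_symm_apply]
  let Φ : S →ₗ[ℂ] Module.End ℂ V :=
    (G.symm.conj.toLinearMap : Module.End ℂ S →ₗ[ℂ] Module.End ℂ V).comp (LinearMap.mul ℂ S)
  have hΦ (s : S) (v : V) : Φ s v = G.symm (s * G v) := rfl
  have hmem (s : S) : Φ s ∈ LinearMap.ker (LinearMap.mulLeft ℂ e - LinearMap.mulRight ℂ e) := by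
    rw [LinearMap.mem_ker, LinearMap.sub_apply, sub_eq_zero]
    ext v
    change e (Φ s v) = Φ s (e v)
    rw [hΦ, hΦ, hG, hG', mul_smul_comm]
  rw [G.finrank_eq]
  refine LinearMap.finrank_le_finrank_of_injective (f := Φ.codRestrict _ hmem) ?_
  rw [← LinearMap.ker_eq_bot, LinearMap.ker_codRestrict, LinearMap.ker_eq_bot']
  intro s hs
  have := hΦ s (G.symm 1)
  rw [hs, G.apply_symm_apply, mul_one, LinearMap.zero_apply] at this
  exact G.symm.map_eq_zero_iff.1 this.symm

theorem finrank_le_of_pencil {E : Type} [AddCommGroup E] [Module ℂ E] [FiniteDimensional ℂ E]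
    (f g : Module.End ℂ E) (d : ℕ)
    (h : ∀ t : ℂ, d ≤ Module.finrank ℂ (LinearMap.ker (f + t • g))) :
    d ≤ Module.finrank ℂ (LinearMap.ker f ⊓ (LinearMap.range f).comap g : Submodule ℂ E) := by
  set K := (LinearMap.ker f ⊓ (LinearMap.range f).comap g : Submodule ℂ E)
  obtain ⟨W, hW⟩ := (LinearMap.ker f).exists_isCompl
  obtain ⟨C, hC⟩ := K.exists_isCompl
  set K' := C ⊓ LinearMap.ker f with hK'
  let Φ : (K' × W) →ₗ[ℂ] E := (g ∘ₗ K'.subtype).coprod (f ∘ₗ W.subtype)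
  let Ψ : (K' × W) →ₗ[ℂ] E := (0 : K' →ₗ[ℂ] E).coprod (g ∘ₗ W.subtype)
  have hΦ : LinearMap.ker Φ = ⊥ := by
    rw [LinearMap.ker_eq_bot']
    rintro ⟨⟨u, hu⟩, ⟨v, hv⟩⟩ huv
    replace huv : g u + f v = 0 := huv
    have hu0 : u = 0 := by
      refine (Submodule.disjoint_def.1 hC.disjoint) u ⟨hu.2, -v, ?_⟩ hu.1
      rw [map_neg, eq_comm, eq_neg_iff_add_eq_zero, huv]
    subst hu0
    rw [map_zero, zero_add] at huv
    have hv0 : v = 0 := (Submodule.disjoint_def.1 hW.disjoint) v huv hv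
    subst hv0
    rfl
  obtain ⟨Λ, hΛ⟩ := Φ.exists_leftInverse_of_injective hΦ
  obtain ⟨μ, hμ⟩ := ((Module.End.finite_spectrum (Λ ∘ₗ Ψ)).union
    (Set.finite_singleton (0 : ℂ))).infinite_compl.nonempty
  simp only [Set.mem_compl_iff, Set.mem_union, Set.mem_singleton_iff, not_or,
    ← Module.End.hasEigenvalue_iff_mem_spectrum] at hμ
  obtain ⟨hμ, hμ0⟩ := hμ
  let J : (K' × W) →ₗ[ℂ] E :=
    (f + (-μ⁻¹) • g) ∘ₗ (((-μ) • K'.subtype).coprod W.subtype)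
  have hJ : J = Φ + (-μ⁻¹) • Ψ := by
    refine LinearMap.ext ?_
    rintro ⟨⟨u, hu⟩, ⟨v, hv⟩⟩
    have hu' : f u = 0 := hu.2
    simp [J, Φ, Ψ, hu', hμ0, smul_smul]
    abel
  have hJi : Function.Injective J := by
    rw [← LinearMap.ker_eq_bot, LinearMap.ker_eq_bot']
    intro x hx
    by_contra hne
    refine hμ (Module.End.hasEigenvalue_of_hasEigenvector (x := x) ⟨?_, hne⟩)
    rw [Module.End.mem_eigenspace_iff]
    have h1 : Λ (Φ x) = x := LinearMap.congr_fun hΛ x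
    rw [hJ] at hx
    have h2 := congrArg Λ hx
    rw [LinearMap.add_apply, LinearMap.smul_apply, map_add, map_smul, h1, map_zero] at h2
    rw [LinearMap.comp_apply]
    have h3 := eq_neg_of_add_eq_zero_left h2
    conv_rhs => rw [h3]
    rw [neg_smul, neg_neg, smul_smul, mul_inv_cancel₀ hμ0, one_smul]
  have h1 : Module.finrank ℂ K' + Module.finrank ℂ W ≤
      Module.finrank ℂ (LinearMap.range (f + (-μ⁻¹) • g)) := by
    rw [← Module.finrank_prod]
    exact LinearMap.finrank_le_finrank_of_injective
      (f := J.codRestrict _ fun x => LinearMap.mem_range_self _ _)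
      (fun x y hxy => hJi (congrArg Subtype.val hxy))
  have h2 := LinearMap.finrank_range_add_finrank_ker (f + (-μ⁻¹) • g)
  have h3 := h (-μ⁻¹)
  have h4 := Submodule.finrank_add_eq_of_isCompl hW
  have h5 := Submodule.finrank_add_eq_of_isCompl hC
  have h6 := Submodule.finrank_sup_add_finrank_inf_eq C (LinearMap.ker f)
  have h7 := Submodule.finrank_le (C ⊔ LinearMap.ker f)
  rw [← hK'] at h6
  omega

/-- The elements of the centralizer of `e` that annihilate the restriction of `α` to it. -/
def centralizerStabilizer {A : Type} [Ring A] [Algebra ℂ A] (e : A) (α : Module.Dual ℂ A) :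
    Submodule ℂ A where
  carrier := {x | e * x = x * e ∧ ∀ y, e * y = y * e → α (x * y) = α (y * x)}
  add_mem' := fun {a b} ha hb => ⟨by rw [mul_add, add_mul, ha.1, hb.1],
    fun y hy => by rw [add_mul, mul_add, map_add, map_add, ha.2 y hy, hb.2 y hy]⟩
  zero_mem' := by simp
  smul_mem' := fun r a ha => ⟨by rw [mul_smul_comm, smul_mul_assoc, ha.1],
    fun y hy => by rw [smul_mul_assoc, mul_smul_comm, map_smul, map_smul, ha.2 y hy]⟩

namespace JordanChains

variable {V : Type} [AddCommGroup V] [Module ℂ V] {e : Module.End ℂ V} (c : JordanChains e)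

theorem pow_apply_w (r : ℕ) (i : Fin c.d) (s : ℕ) : (e ^ r) (c.w i s) = c.w i (s + r) := by
  induction r with
  | zero => simp
  | succ r ih => rw [pow_succ', Module.End.mul_apply, ih, c.apply_w, add_assoc]

theorem hom_ext {W : Type} [AddCommGroup W] [Module ℂ W] {f g : V →ₗ[ℂ] W}
    (h : ∀ i s, f (c.w i s) = g (c.w i s)) : f = g := by
  ext x
  rw [c.eq_sum x]
  simp only [map_sum, map_smul, h]

theorem l_pow_apply (r : ℕ) (j : Fin c.d) (t : ℕ) (x : V) :
    c.l j t ((e ^ r) x) = if r ≤ t ∧ t < c.k j then c.l j (t - r) x else 0 := by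
  have : c.l j t ∘ₗ (e ^ r) = if r ≤ t ∧ t < c.k j then c.l j (t - r) else 0 := by
    refine c.hom_ext fun i s => ?_
    rw [LinearMap.comp_apply, pow_apply_w, l_w]
    split_ifs with h1 h2 h2 <;> simp only [l_w, LinearMap.zero_apply] <;> grind
  rw [← LinearMap.comp_apply, this]
  split_ifs <;> rfl

/-- The endomorphism sending the `j`-th chain to the `i`-th chain, shifted by `r`. -/
noncomputable def shift (i j : Fin c.d) (r : ℕ) : Module.End ℂ V :=
  ∑ s ∈ Finset.range (c.k j), (c.l j s).smulRight (c.w i (s + r))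

theorem shift_w {i j : Fin c.d} {r : ℕ} (h : c.k i ≤ c.k j + r) (a : Fin c.d) (s : ℕ) :
    c.shift i j r (c.w a s) = if a = j then c.w i (s + r) else 0 := by
  simp only [shift, LinearMap.sum_apply, LinearMap.smulRight_apply, l_w, ite_smul, one_smul,
    zero_smul]
  split_ifs with ha
  · subst ha
    by_cases hs : s < c.k a
    · rw [Finset.sum_eq_single s] <;> grind
    · rw [c.w_eq_zero i (s + r) (by omega)]
      exact Finset.sum_eq_zero fun t _ => if_neg (by grind)
  · exact Finset.sum_eq_zero fun t _ => if_neg (by grind)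

theorem shift_comm {i j : Fin c.d} {r : ℕ} (h : c.k i ≤ c.k j + r) :
    e * c.shift i j r = c.shift i j r * e := by
  refine c.hom_ext fun a s => ?_
  rw [Module.End.mul_apply, Module.End.mul_apply, c.apply_w, c.shift_w h, c.shift_w h]
  split_ifs
  · rw [c.apply_w, add_right_comm]
  · exact map_zero _

theorem l_shift {i j : Fin c.d} {r : ℕ} (h : c.k i ≤ c.k j + r) (a : Fin c.d) (t : ℕ) (x : V) :
    c.l a t (c.shift i j r x) = if a = i ∧ r ≤ t ∧ t < c.k i then c.l j (t - r) x else 0 := by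
  have : c.l a t ∘ₗ c.shift i j r =
      if a = i ∧ r ≤ t ∧ t < c.k i then c.l j (t - r) else 0 := by
    refine c.hom_ext fun b s => ?_
    rw [LinearMap.comp_apply, c.shift_w h]
    split_ifs with h1 h2 h2 <;> simp only [l_w, LinearMap.zero_apply, map_zero] <;> grind
  rw [← LinearMap.comp_apply, this]
  split_ifs <;> rfl

/-- The weighted sum, over all chains, of the coefficients of the last vector of the chain in the
image of its first vector. The weights `i + 1` are distinct and positive. -/
noncomputable def functional : Module.Dual ℂ (Module.End ℂ V) :=
  ∑ i : Fin c.d, ((i : ℕ) + 1 : ℂ) • (c.l i (c.k i - 1) ∘ₗ LinearMap.applyₗ (c.w i 0))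

theorem functional_apply (φ : Module.End ℂ V) : c.functional φ =
    ∑ i : Fin c.d, ((i : ℕ) + 1 : ℂ) * c.l i (c.k i - 1) (φ (c.w i 0)) := by
  simp [functional, LinearMap.sum_apply]

theorem functional_mul_shift (φ : Module.End ℂ V) (hφ : e * φ = φ * e) {i j : Fin c.d} {r : ℕ}
    (h : c.k i ≤ c.k j + r) : c.functional (φ * c.shift i j r) =
      ((j : ℕ) + 1 : ℂ) * if r < c.k j then c.l j (c.k j - 1 - r) (φ (c.w i 0)) else 0 := by
  rw [functional_apply, Finset.sum_eq_single j]
  · have h1 : φ (c.w i r) = (e ^ r) (φ (c.w i 0)) := by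
      have : Commute (e ^ r) φ := Commute.pow_left hφ r
      rw [← Module.End.mul_apply, this.eq, Module.End.mul_apply, pow_apply_w, zero_add]
    rw [Module.End.mul_apply, c.shift_w h, if_pos rfl, zero_add, h1, l_pow_apply]
    congr 1
    exact if_congr (by omega) rfl rfl
  · intro a _ ha
    rw [Module.End.mul_apply, c.shift_w h, if_neg ha, map_zero, map_zero, mul_zero]
  · simp

theorem functional_shift_mul (φ : Module.End ℂ V) {i j : Fin c.d} {r : ℕ}
    (h : c.k i ≤ c.k j + r) : c.functional (c.shift i j r * φ) =
      ((i : ℕ) + 1 : ℂ) * if r < c.k i then c.l j (c.k i - 1 - r) (φ (c.w i 0)) else 0 := by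
  rw [functional_apply, Finset.sum_eq_single i]
  · rw [Module.End.mul_apply, c.l_shift h]
    congr 1
    exact if_congr (by omega) rfl rfl
  · intro a _ ha
    rw [Module.End.mul_apply, c.l_shift h, if_neg (by tauto), mul_zero]
  · simp

theorem l_eq_zero_of_stabilizer {φ : Module.End ℂ V} (hφ : e * φ = φ * e)
    (H : ∀ ψ, e * ψ = ψ * e → c.functional (φ * ψ) = c.functional (ψ * φ))
    {i j : Fin c.d} (hij : i ≠ j) (s : ℕ) (hs : s < c.k j) : c.l j s (φ (c.w i 0)) = 0 := by
  have hne : ((i : ℕ) + 1 : ℂ) ≠ ((j : ℕ) + 1 : ℂ) := by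
    intro h
    exact hij (Fin.ext (Nat.succ_injective (by exact_mod_cast h)))
  have hi : ((i : ℕ) + 1 : ℂ) ≠ 0 := Nat.cast_add_one_ne_zero _
  have hj : ((j : ℕ) + 1 : ℂ) ≠ 0 := Nat.cast_add_one_ne_zero _
  have key (r : ℕ) (h : c.k i ≤ c.k j + r) := by
    have := H _ (c.shift_comm h)
    rwa [c.functional_mul_shift φ hφ h, c.functional_shift_mul φ h] at this
  induction s using Nat.strong_induction_on with
  | _ s ih =>
  rcases lt_trichotomy (c.k i) (c.k j) with hlt | heq | hgt
  · have h := key (c.k j - 1 - s) (by omega)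
    rw [if_pos (by omega), show c.k j - 1 - (c.k j - 1 - s) = s by omega] at h
    have h0 : (if c.k j - 1 - s < c.k i then
        c.l j (c.k i - 1 - (c.k j - 1 - s)) (φ (c.w i 0)) else 0) = 0 := by
      split_ifs
      · exact ih _ (by omega) (by omega)
      · rfl
    rw [h0, mul_zero] at h
    exact (mul_eq_zero.1 h).resolve_left hj
  · have h := key (c.k j - 1 - s) (by omega)
    rw [if_pos (by omega), if_pos (by omega), heq,
      show c.k j - 1 - (c.k j - 1 - s) = s by omega] at h
    by_contra h0
    exact hne (mul_right_cancel₀ h0 h).symm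
  · have h := key (c.k i - 1 - s) (by omega)
    rw [if_pos (show c.k i - 1 - s < c.k i by omega),
      show c.k i - 1 - (c.k i - 1 - s) = s by omega] at h
    have h0 : (if c.k i - 1 - s < c.k j then
        c.l j (c.k j - 1 - (c.k i - 1 - s)) (φ (c.w i 0)) else 0) = 0 := by
      split_ifs
      · exact ih _ (by omega) (by omega)
      · rfl
    rw [h0, mul_zero, eq_comm] at h
    exact (mul_eq_zero.1 h).resolve_left hi

theorem finrank_centralizerStabilizer_le [FiniteDimensional ℂ V] :
    Module.finrank ℂ (centralizerStabilizer e c.functional) ≤ Module.finrank ℂ V := by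
  let T : centralizerStabilizer e c.functional →ₗ[ℂ] V :=
    (LinearMap.applyₗ (∑ i, c.w i 0)) ∘ₗ (centralizerStabilizer e c.functional).subtype
  refine LinearMap.finrank_le_finrank_of_injective (f := T) ?_
  rw [← LinearMap.ker_eq_bot, LinearMap.ker_eq_bot']
  rintro ⟨φ, hφ, H⟩ hT
  replace hT : φ (∑ i, c.w i 0) = 0 := hT
  rw [map_sum] at hT
  have h0 (i j : Fin c.d) (s : ℕ) (hs : s < c.k j) : c.l j s (φ (c.w i 0)) = 0 := by
    by_cases hij : i = j
    · subst hij
      have := congrArg (c.l i s) hT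
      rw [map_sum, map_zero, Finset.sum_eq_single i] at this
      · exact this
      · exact fun a _ ha => c.l_eq_zero_of_stabilizer hφ H ha s hs
      · simp
    · exact c.l_eq_zero_of_stabilizer hφ H hij s hs
  refine Subtype.ext (c.hom_ext fun i s => ?_)
  have h1 : φ (c.w i 0) = 0 := by
    rw [c.eq_sum (φ (c.w i 0))]
    exact Finset.sum_eq_zero fun j _ => Finset.sum_eq_zero fun t ht => by
      rw [h0 i j t (Finset.mem_range.1 ht), zero_smul]
  have h2 : Commute (e ^ s) φ := Commute.pow_left hφ s
  rw [← Nat.zero_add s, ← pow_apply_w, ← Module.End.mul_apply, ← h2.eq, Module.End.mul_apply, h1,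
    map_zero]
  rfl

theorem exists_grading (c : JordanChains e) : ∃ D : Module.End ℂ V, D * e - e * D = e := by
  let D : Module.End ℂ V :=
    ∑ i, ∑ s ∈ Finset.range (c.k i), (s : ℂ) • (c.l i s).smulRight (c.w i s)
  have hD (i : Fin c.d) (s : ℕ) : D (c.w i s) = (s : ℂ) • c.w i s := by
    simp only [D, LinearMap.sum_apply, LinearMap.smul_apply, LinearMap.smulRight_apply]
    rw [Finset.sum_eq_single i]
    · by_cases hs : s < c.k i
      · rw [Finset.sum_eq_single s]
        · rw [l_w, if_pos ⟨rfl, rfl, hs⟩, one_smul]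
        · intro t _ ht
          rw [l_w, if_neg (by tauto), zero_smul, smul_zero]
        · simp [hs]
      · rw [c.w_eq_zero i s (not_lt.1 hs), smul_zero]
        exact Finset.sum_eq_zero fun t _ => by rw [map_zero, zero_smul, smul_zero]
    · intro j _ hj
      exact Finset.sum_eq_zero fun t _ => by rw [l_w, if_neg (by tauto), zero_smul, smul_zero]
    · simp
  refine ⟨D, c.hom_ext fun i s => ?_⟩
  rw [LinearMap.sub_apply, Module.End.mul_apply, Module.End.mul_apply, c.apply_w, hD, hD, map_smul,
    c.apply_w, ← sub_smul]
  push_cast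
  rw [add_sub_cancel_left, one_smul]

theorem exists_longest [Nontrivial V] : ∃ i, (∀ j, c.k j ≤ c.k i) ∧ 0 < c.k i := by
  have : Nonempty (Fin c.d) := by
    by_contra h
    rw [not_nonempty_iff] at h
    obtain ⟨x, hx⟩ := exists_ne (0 : V)
    exact hx ((c.eq_sum x).trans (Finset.sum_of_isEmpty _))
  obtain ⟨i, hi⟩ := Finite.exists_max c.k
  refine ⟨i, hi, Nat.pos_of_ne_zero fun h => ?_⟩
  obtain ⟨x, hx⟩ := exists_ne (0 : V)
  refine hx ((c.eq_sum x).trans (Finset.sum_eq_zero fun j _ => ?_))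
  rw [show c.k j = 0 from Nat.le_zero.1 ((hi j).trans_eq h)]
  rfl

theorem exists_aeval_of_commute {i : Fin c.d} (hi : ∀ j, c.k j ≤ c.k i) {z : Module.End ℂ V}
    (hz : ∀ ψ, e * ψ = ψ * e → z * ψ = ψ * z) : ∃ p : Polynomial ℂ, z = Polynomial.aeval e p := by
  have hk (j : Fin c.d) : c.k j ≤ c.k i + 0 := hi j
  have hzw (j : Fin c.d) : z (c.w j 0) = c.shift j i 0 (z (c.w i 0)) := by
    have := LinearMap.congr_fun (hz _ (c.shift_comm (hk j))) (c.w i 0)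
    rwa [Module.End.mul_apply, Module.End.mul_apply, c.shift_w (hk j), if_pos rfl] at this
  refine ⟨∑ s ∈ Finset.range (c.k i), Polynomial.C (c.l i s (z (c.w i 0))) * Polynomial.X ^ s,
    c.hom_ext fun j t => ?_⟩
  have ht : Commute (e ^ t) z := (Commute.pow_right (hz e rfl) t).symm
  rw [← Nat.zero_add t, ← pow_apply_w, ← Module.End.mul_apply, ← ht.eq, Module.End.mul_apply, hzw]
  simp only [shift, LinearMap.sum_apply, LinearMap.smulRight_apply, map_sum, map_mul,
    Polynomial.aeval_C, map_pow, Polynomial.aeval_X, map_smul, Module.End.mul_apply,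
    Module.algebraMap_end_apply, pow_apply_w]
  exact Finset.sum_congr rfl fun s _ => by congr 2; omega

theorem functional_pow_ne_zero {i : Fin c.d} (hi : ∀ j, c.k j ≤ c.k i) (h0 : 0 < c.k i) :
    c.functional (e ^ (c.k i - 1)) ≠ 0 := by
  have : c.functional (e ^ (c.k i - 1)) =
      ((∑ j : Fin c.d, if c.k j = c.k i then ((j : ℕ) + 1) else 0 : ℕ) : ℂ) := by
    rw [functional_apply]
    push_cast
    refine Finset.sum_congr rfl fun j _ => ?_
    have := hi j
    rw [pow_apply_w, l_w, mul_ite, mul_one, mul_zero]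
    exact if_congr (by grind) rfl rfl
  rw [this, Nat.cast_ne_zero, ← Nat.pos_iff_ne_zero]
  exact Finset.sum_pos' (fun _ _ => Nat.zero_le _) ⟨i, Finset.mem_univ i, by simp⟩

theorem pow_eq_zero {i : Fin c.d} (hi : ∀ j, c.k j ≤ c.k i) : e ^ c.k i = 0 :=
  c.hom_ext fun j s => by
    rw [pow_apply_w, LinearMap.zero_apply, c.w_eq_zero _ _ ((hi j).trans (Nat.le_add_left _ _))]

end JordanChains

theorem exists_functional_of_isNilpotent {n : ℕ} (hn : 0 < n) (e : Matrix (Fin n) (Fin n) ℂ)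
    (he : IsNilpotent e) :
    ∃ (m : ℕ) (α : Module.Dual ℂ (Matrix (Fin n) (Fin n) ℂ)) (D : Matrix (Fin n) (Fin n) ℂ),
      e ^ (m + 1) = 0 ∧ α (e ^ m) ≠ 0 ∧ Module.finrank ℂ (centralizerStabilizer e α) ≤ n ∧
      D * e - e * D = e ∧
      ∀ z, (∀ y, e * y = y * e → z * y = y * z) → ∃ p : Polynomial ℂ, z = Polynomial.aeval e p := by
  let τ : Matrix (Fin n) (Fin n) ℂ ≃ₐ[ℂ] Module.End ℂ (Fin n → ℂ) := Matrix.toLinAlgEquiv'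
  have : Nonempty (Fin n) := ⟨⟨0, hn⟩⟩
  obtain ⟨c⟩ := JordanChains.nonempty (τ e) (he.map τ)
  obtain ⟨i, hi, h0⟩ := c.exists_longest
  obtain ⟨D, hD⟩ := c.exists_grading
  refine ⟨c.k i - 1, c.functional ∘ₗ τ.toLinearMap, τ.symm D, ?_, ?_, ?_, ?_, ?_⟩
  · rw [Nat.sub_add_cancel h0]
    apply τ.injective
    rw [map_pow, c.pow_eq_zero hi, map_zero]
  · change c.functional (τ (e ^ _)) ≠ 0
    rw [map_pow]
    exact c.functional_pow_ne_zero hi h0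
  · have hle : (centralizerStabilizer e (c.functional ∘ₗ τ.toLinearMap)).map
        τ.toLinearEquiv.toLinearMap ≤ centralizerStabilizer (τ e) c.functional := by
      rintro _ ⟨x, ⟨hx, H⟩, rfl⟩
      change τ e * τ x = τ x * τ e ∧ ∀ y, τ e * y = y * τ e →
        c.functional (τ x * y) = c.functional (y * τ x)
      refine ⟨by rw [← map_mul, hx, map_mul], fun y hy => ?_⟩
      obtain ⟨y, rfl⟩ := τ.surjective y
      rw [← map_mul, ← map_mul] at hy ⊢
      exact H y (τ.injective hy)
    have h1 := Submodule.finrank_mono hle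
    rw [LinearEquiv.finrank_map_eq] at h1
    exact h1.trans (c.finrank_centralizerStabilizer_le.trans (by simp))
  · apply τ.injective
    rw [map_sub, map_mul, map_mul, τ.apply_symm_apply, hD]
  · intro z hz
    obtain ⟨p, hp⟩ := c.exists_aeval_of_commute hi (z := τ z) fun y hy => by
      obtain ⟨y, rfl⟩ := τ.surjective y
      rw [← map_mul, ← map_mul] at hy ⊢
      rw [hz y (τ.injective hy)]
    refine ⟨p, τ.injective ?_⟩
    rw [hp]
    exact Polynomial.aeval_algHom_apply τ.toAlgHom e p

open Polynomial Matrix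

theorem isNilpotent_of_ad_isNilpotent {n : ℕ} (hn : 0 < n)
    (e : LieAlgebra.SpecialLinear.sl (Fin n) ℂ)
    (he : IsNilpotent (LieAlgebra.ad ℂ (LieAlgebra.SpecialLinear.sl (Fin n) ℂ) e)) :
    IsNilpotent (e : Matrix (Fin n) (Fin n) ℂ) := by
  have : Nonempty (Fin n) := ⟨⟨0, hn⟩⟩
  obtain ⟨N, hN⟩ := he
  have htr : trace (e : Matrix (Fin n) (Fin n) ℂ) = 0 := e.2
  obtain ⟨μ, hμ⟩ := Module.End.exists_eigenvalue (toLin' (e : Matrix (Fin n) (Fin n) ℂ))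
  obtain ⟨w, hw⟩ := hμ.exists_hasEigenvector
  set a : Matrix (Fin n) (Fin n) ℂ := e - μ • 1 with ha
  have haw : a *ᵥ w = 0 := by
    have := hw.apply_eq_smul
    rw [toLin'_apply] at this
    rw [ha, sub_mulVec, this, smul_mulVec, one_mulVec, sub_self]
  have had (k : ℕ) (y : LieAlgebra.SpecialLinear.sl (Fin n) ℂ) :
      (((LieAlgebra.ad ℂ _ e) ^ k) y : Matrix (Fin n) (Fin n) ℂ) *ᵥ w =
        (a ^ k) *ᵥ ((y : Matrix (Fin n) (Fin n) ℂ) *ᵥ w) := by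
    induction k generalizing y with
    | zero => simp
    | succ k ih =>
      have h1 : (⁅e, y⁆ : LieAlgebra.SpecialLinear.sl (Fin n) ℂ).val = a * y.val - y.val * a := by
        rw [LieAlgebra.SpecialLinear.sl_bracket, ha]
        simp [sub_mul, mul_sub]
      rw [pow_succ, Module.End.mul_apply, ih, LieAlgebra.ad_apply, h1, sub_mulVec, pow_succ,
        ← mulVec_mulVec, ← mulVec_mulVec, ← mulVec_mulVec, haw, mulVec_zero, sub_zero]
  have hmat (X : Matrix (Fin n) (Fin n) ℂ) : (a ^ (N + 1)) *ᵥ (X *ᵥ w) = 0 := by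
    have hY : trace (a * X - X * a) = 0 := by rw [trace_sub, trace_mul_comm, sub_self]
    have := had N ⟨a * X - X * a, hY⟩
    rw [hN, LinearMap.zero_apply, ZeroMemClass.coe_zero, zero_mulVec, sub_mulVec,
      ← mulVec_mulVec, ← mulVec_mulVec, haw, mulVec_zero, sub_zero, mulVec_mulVec,
      ← pow_succ] at this
    exact this.symm
  obtain ⟨j, hj⟩ := Function.ne_iff.1 hw.2
  have hnil : IsNilpotent a := by
    refine ⟨N + 1, ?_⟩
    ext v u
    have := hmat (vecMulVec (Pi.single u 1) (Pi.single j (w j)⁻¹))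
    rw [vecMulVec_mulVec, single_dotProduct, inv_mul_cancel₀ hj, MulOpposite.op_one,
      one_smul] at this
    simpa using congr_fun this v
  have h0 := (isNilpotent_trace_of_isNilpotent hnil).eq_zero
  rw [ha, trace_sub, htr, trace_smul, trace_one, Fintype.card_fin, zero_sub, neg_eq_zero,
    smul_eq_mul, mul_eq_zero, or_iff_left (Nat.cast_ne_zero.2 hn.ne')] at h0
  rwa [ha, h0, zero_smul, sub_zero] at hnil

theorem mul_aeval_sub_aeval_mul {A : Type} [Ring A] [Algebra ℂ A] {D e : A}
    (h : D * e - e * D = e) (p : ℂ[X]) :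
    D * aeval e p - aeval e p * D = aeval e (X * derivative p) := by
  induction p using Polynomial.induction_on' with
  | add p q hp hq =>
    rw [derivative_add, mul_add, map_add, map_add, ← hp, ← hq]
    noncomm_ring
  | monomial k r =>
    have hk (k : ℕ) : D * e ^ k - e ^ k * D = (k : ℂ) • e ^ k := by
      induction k with
      | zero => simp
      | succ k ih =>
        have : D * e ^ (k + 1) - e ^ (k + 1) * D =
            (D * e ^ k - e ^ k * D) * e + e ^ k * (D * e - e * D) := by
          rw [pow_succ]
          noncomm_ring
        rw [this, ih, h, smul_mul_assoc, ← pow_succ]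
        push_cast
        rw [add_smul, one_smul]
    rw [aeval_monomial, ← Algebra.smul_def, mul_smul_comm, smul_mul_assoc, ← smul_sub, hk,
      derivative_monomial, X_mul_monomial, aeval_monomial, ← Algebra.smul_def, smul_smul]
    cases k <;> simp

theorem mul_pow_sub_pow_mul {A : Type} [Ring A] {x e : A}
    (h : Commute (x * e - e * x) e) (k : ℕ) :
    x * e ^ (k + 1) - e ^ (k + 1) * x = (k + 1) • ((x * e - e * x) * e ^ k) := by
  induction k with
  | zero => simp
  | succ k ih =>
    have : x * e ^ (k + 2) - e ^ (k + 2) * x =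
        (x * e ^ (k + 1) - e ^ (k + 1) * x) * e + e ^ (k + 1) * (x * e - e * x) := by
      rw [pow_succ e (k + 1)]
      noncomm_ring
    rw [this, ih, ← (h.pow_right (k + 1)).eq, succ_nsmul _ (k + 1), smul_mul_assoc, mul_assoc,
      ← pow_succ]

theorem exists_lowest_term {n m : ℕ} (hn : 0 < n) {e : Matrix (Fin n) (Fin n) ℂ}
    (hm : e ^ (m + 1) = 0) {p : ℂ[X]} (h0 : aeval e p ≠ 0) (htr : trace (aeval e p) = 0) :
    ∃ j c, c ≠ 0 ∧ 1 ≤ j ∧ j ≤ m ∧ aeval e p * e ^ (m - j) = c • e ^ m ∧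
      aeval e (X * derivative p) * e ^ (m - j) = ((j : ℂ) * c) • e ^ m := by
  have hX (k : ℕ) : e ^ k = aeval e (X ^ k : ℂ[X]) := by rw [map_pow, aeval_X]
  have hpow (k : ℕ) (hk : m + 1 ≤ k) : e ^ k = 0 := pow_eq_zero_of_le hk hm
  have hp0 : p ≠ 0 := by
    rintro rfl
    exact h0 (map_zero _)
  obtain ⟨q, hpq, hq⟩ := exists_eq_pow_rootMultiplicity_mul_and_not_dvd p hp0 0
  rw [map_zero, sub_zero] at hpq hq
  rw [X_dvd_iff] at hq
  generalize rootMultiplicity 0 p = j at hpq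
  obtain ⟨r, hr⟩ : ∃ r, q = C (q.coeff 0) + X * r :=
    ⟨_, ((add_comm _ _).trans (X_mul_divX_add q)).symm⟩
  generalize q.coeff 0 = c at hq hr
  subst hr
  have hj : j ≤ m := by
    by_contra hj
    rw [hpq, map_mul, map_pow, aeval_X, hpow j (by omega), zero_mul] at h0
    exact h0 rfl
  have hj1 : 1 ≤ j := by
    rw [Nat.one_le_iff_ne_zero]
    rintro rfl
    have hnil : IsNilpotent (aeval e (X * r)) := by
      exact ⟨m + 1, by rw [← map_pow, mul_pow, map_mul, map_pow, aeval_X, hm, zero_mul]⟩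
    rw [hpq, pow_zero, one_mul, map_add, trace_add,
      (isNilpotent_trace_of_isNilpotent hnil).eq_zero, aeval_C, Algebra.algebraMap_eq_smul_one,
      trace_smul, trace_one] at htr
    simp [hq, hn.ne'] at htr
  refine ⟨j, c, hq, hj1, hj, ?_, ?_⟩
  · rw [hX, hX, ← map_mul, ← map_smul, hpq]
    have : X ^ j * (C c + X * r) * X ^ (m - j) = c • X ^ m + X ^ (m + 1) * r := by
      rw [show m = j + (m - j) by omega, smul_eq_C_mul]
      simp only [Nat.add_sub_cancel_left]
      ring
    rw [this, map_add, map_mul, map_pow, aeval_X, hm, zero_mul, add_zero]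
  · rw [hX, hX, ← map_mul, ← map_smul, hpq]
    obtain ⟨i, rfl⟩ := Nat.exists_eq_add_of_le' hj1
    have : X * derivative (X ^ (i + 1) * (C c + X * r)) * X ^ (m - (i + 1)) =
        (((i + 1 : ℕ) : ℂ) * c) • X ^ m +
          X ^ (m + 1) * (((i + 1 : ℕ) : ℂ[X]) * r + r + X * derivative r) := by
      obtain ⟨k, rfl⟩ := Nat.exists_eq_add_of_le hj
      simp only [Nat.add_sub_cancel_left, smul_eq_C_mul, derivative_mul, derivative_add,
        derivative_C, derivative_X_pow, derivative_X, map_mul, map_natCast, Nat.add_sub_cancel]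
      ring
    rw [this, map_add, map_mul _ (X ^ (m + 1)), map_pow, aeval_X, hm, zero_mul, add_zero]

theorem mem_normalizer_centralizer_iff {L : Type} [LieRing L] [LieAlgebra ℂ L] {e x : L} :
    x ∈ (centralizer L e).normalizer ↔ ⁅x, e⁆ ∈ zCenter L e := by
  rw [LieSubalgebra.mem_normalizer_iff]
  constructor
  · intro h
    refine ⟨h e (lie_self e), fun y hy => ?_⟩
    have h1 : ⁅⁅x, y⁆, e⁆ = 0 := h y hy
    have h2 : ⁅e, y⁆ = 0 := by rw [← lie_skew, hy, neg_zero]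
    rw [lie_lie, h2, lie_zero, zero_sub, lie_skew, h1]
  · intro h y hy
    have hy' : ⁅y, e⁆ = 0 := hy
    change ⁅⁅x, y⁆, e⁆ = 0
    rw [lie_lie, hy', lie_zero, zero_sub, lie_skew, h.2 y hy]

theorem le_finrank_coadStab_add_finrank_zCenter {L : Type} [LieRing L] [LieAlgebra ℂ L]
    [FiniteDimensional ℂ L] (e : L) (ξ : Module.Dual ℂ (centralizer L e).normalizer)
    (F : Module.Dual ℂ L) (hF : ∀ x : (centralizer L e).normalizer, F x = ξ x)
    (P : Submodule ℂ L) (hP : ∀ x ∈ P, ⁅x, e⁆ = 0 ∧ ∀ y, ⁅y, e⁆ = 0 → F ⁅x, y⁆ = 0) :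
    Module.finrank ℂ P ≤
      Module.finrank ℂ (coadStab _ ξ) + Module.finrank ℂ (zCenter L e) := by
  let N := (centralizer L e).normalizer
  let κ : N →ₗ[ℂ] zCenter L e :=
    { toFun := fun y => ⟨⁅(y : L), e⁆, mem_normalizer_centralizer_iff.1 y.2⟩
      map_add' := fun a b => Subtype.ext (add_lie _ _ _)
      map_smul' := fun r a => Subtype.ext (smul_lie _ _ _) }
  let Θ : P →ₗ[ℂ] Module.Dual ℂ N := LinearMap.mk₂ ℂ (fun x y => F ⁅(x : L), (y : L)⁆)
    (fun a b y => by simp) (fun r a y => by simp) (fun a b y => by simp) (fun r a y => by simp)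
  have h1 : Module.finrank ℂ (LinearMap.range Θ) ≤ Module.finrank ℂ (zCenter L e) := by
    have hle : LinearMap.range Θ ≤ (LinearMap.ker κ).dualAnnihilator := by
      rintro _ ⟨x, rfl⟩
      rw [Submodule.mem_dualAnnihilator]
      exact fun y hy => (hP x x.2).2 y (congrArg Subtype.val hy)
    have h2 := Submodule.finrank_mono hle
    have h3 := Subspace.finrank_add_finrank_dualAnnihilator_eq (LinearMap.ker κ)
    have h4 := LinearMap.finrank_range_add_finrank_ker κ
    have h5 := Submodule.finrank_le (LinearMap.range κ)
    omega
  have h2 : Module.finrank ℂ (LinearMap.ker Θ) ≤ Module.finrank ℂ (coadStab _ ξ) := by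
    let T : LinearMap.ker Θ →ₗ[ℂ] coadStab _ ξ :=
      { toFun := fun x => ⟨⟨x, (centralizer L e).le_normalizer (hP x x.1.2).1⟩, fun y => by
          rw [← hF]
          exact LinearMap.congr_fun x.2 y⟩
        map_add' := fun a b => rfl
        map_smul' := fun r a => rfl }
    refine LinearMap.finrank_le_finrank_of_injective (f := T) fun a b hab => ?_
    exact Subtype.ext (Subtype.ext (congrArg (fun x : coadStab _ ξ => x.1.1) hab))
  have h3 := LinearMap.finrank_range_add_finrank_ker Θ
  omega

theorem le_finrank_centralizer_matrix {n : ℕ} (A : Matrix (Fin n) (Fin n) ℂ) :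
    n ≤ Module.finrank ℂ (LinearMap.ker (LinearMap.mulLeft ℂ A - LinearMap.mulRight ℂ A)) := by
  let τ : Matrix (Fin n) (Fin n) ℂ ≃ₐ[ℂ] Module.End ℂ (Fin n → ℂ) := Matrix.toLinAlgEquiv'
  have h1 := le_finrank_centralizer (τ A)
  have h2 : LinearMap.ker (LinearMap.mulLeft ℂ (τ A) - LinearMap.mulRight ℂ (τ A)) ≤
      (LinearMap.ker (LinearMap.mulLeft ℂ A - LinearMap.mulRight ℂ A)).map
        τ.toLinearEquiv.toLinearMap := by
    intro y hy
    obtain ⟨x, rfl⟩ := τ.surjective y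
    refine ⟨x, τ.injective ?_, rfl⟩
    rw [map_zero, ← LinearMap.mem_ker.1 hy]
    simp
  have h3 := Submodule.finrank_mono h2
  rw [LinearEquiv.finrank_map_eq] at h3
  simpa using h1.trans h3

theorem exists_eq_trace_mul {n : ℕ} (F : Module.Dual ℂ (Matrix (Fin n) (Fin n) ℂ)) :
    ∃ A : Matrix (Fin n) (Fin n) ℂ, ∀ X, F X = trace (A * X) := by
  refine ⟨of fun i j => F (single j i 1), fun X => ?_⟩
  conv_lhs => rw [matrix_eq_sum_single X]
  simp only [trace, diag_apply, mul_apply, of_apply, map_sum]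
  rw [Finset.sum_comm]
  refine Finset.sum_congr rfl fun i _ => Finset.sum_congr rfl fun j _ => ?_
  rw [← mul_one (X j i), ← smul_eq_mul (X j i), ← smul_single, map_smul, smul_eq_mul, smul_eq_mul,
    mul_one, mul_comm]

/-- The inclusion of `𝔰𝔩(n, ℂ)` in the space of matrices, as a linear map. -/
def slVal (n : ℕ) : LieAlgebra.SpecialLinear.sl (Fin n) ℂ →ₗ[ℂ] Matrix (Fin n) (Fin n) ℂ where
  toFun x := x.val
  map_add' _ _ := rfl
  map_smul' _ _ := rfl

theorem slVal_injective (n : ℕ) : Function.Injective (slVal n) :=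
  fun _ _ h => Subtype.ext h

theorem exists_stabilizing_subspace {n : ℕ} (e : LieAlgebra.SpecialLinear.sl (Fin n) ℂ)
    (F : Module.Dual ℂ (LieAlgebra.SpecialLinear.sl (Fin n) ℂ)) :
    ∃ P : Submodule ℂ (LieAlgebra.SpecialLinear.sl (Fin n) ℂ), n ≤ Module.finrank ℂ P + 1 ∧
      ∀ x ∈ P, ⁅x, e⁆ = 0 ∧ ∀ y, ⁅y, e⁆ = 0 → F ⁅x, y⁆ = 0 := by
  obtain ⟨r, hr⟩ := (slVal n).exists_leftInverse_of_injective
    (LinearMap.ker_eq_bot.2 (slVal_injective n))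
  obtain ⟨A, hA⟩ := exists_eq_trace_mul (F ∘ₗ r)
  let ad (B : Matrix (Fin n) (Fin n) ℂ) := LinearMap.mulLeft ℂ B - LinearMap.mulRight ℂ B
  set K := LinearMap.ker (ad e) ⊓ (LinearMap.range (ad e)).comap (ad A)
  have hKn : n ≤ Module.finrank ℂ K := finrank_le_of_pencil _ _ _ fun t => by
    have : ad e + t • ad A = ad (e + t • A) := by
      ext1 X
      simp only [ad, LinearMap.add_apply, LinearMap.smul_apply, LinearMap.sub_apply,
        LinearMap.mulLeft_apply, LinearMap.mulRight_apply, add_mul, mul_add, smul_mul_assoc,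
        mul_smul_comm, smul_sub]
      abel
    rw [this]
    exact le_finrank_centralizer_matrix _
  refine ⟨K.comap (slVal n), ?_, ?_⟩
  · let T : K →ₗ[ℂ] ℂ := traceLinearMap (Fin n) ℂ ℂ ∘ₗ K.subtype
    let J : LinearMap.ker T →ₗ[ℂ]
        K.comap (slVal n) :=
      { toFun := fun x => ⟨⟨x, x.2⟩, x.1.2⟩
        map_add' := fun a b => rfl
        map_smul' := fun r a => rfl }
    have h1 := LinearMap.finrank_le_finrank_of_injective (f := J) fun a b hab =>
      Subtype.ext (Subtype.ext (congrArg (fun x => (x.1 : Matrix (Fin n) (Fin n) ℂ)) hab))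
    have h2 := LinearMap.finrank_range_add_finrank_ker T
    have h3 := Submodule.finrank_le (LinearMap.range T)
    rw [Module.finrank_self] at h3
    omega
  · rintro x ⟨hx, C, hC⟩
    have hx' : e.val * x.val - x.val * e.val = 0 := hx
    have hC' : e.val * C - C * e.val = A * x.val - x.val * A := hC
    refine ⟨Subtype.ext ?_, fun y hy => ?_⟩
    · rw [LieAlgebra.SpecialLinear.sl_bracket, ← neg_sub, hx', neg_zero]
      rfl
    · have hy' : y.val * e.val - e.val * y.val = 0 := by
        rw [← LieAlgebra.SpecialLinear.sl_bracket, hy]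
        rfl
      have hFF : F ⁅x, y⁆ = (F ∘ₗ r) (x.val * y.val - y.val * x.val) :=
        congrArg F (LinearMap.congr_fun hr ⁅x, y⁆).symm
      have h1 : trace (A * (x.val * y.val - y.val * x.val)) =
          trace ((A * x.val - x.val * A) * y.val) := by
        rw [mul_sub, sub_mul, trace_sub, trace_sub, ← mul_assoc, ← mul_assoc,
          trace_mul_comm (A * y.val), ← mul_assoc]
      have h2 : trace ((e.val * C - C * e.val) * y.val) =
          trace (C * (y.val * e.val - e.val * y.val)) := by
        rw [mul_sub, sub_mul, trace_sub, trace_sub, mul_assoc, trace_mul_comm e.val, mul_assoc,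
          mul_assoc]
      rw [hFF, hA, h1, ← hC', h2, hy', mul_zero, trace_zero]

theorem exists_traceless_part {n : ℕ} (hn : 0 < n) (y : Matrix (Fin n) (Fin n) ℂ) :
    ∃ y₀ : LieAlgebra.SpecialLinear.sl (Fin n) ℂ, ∀ x : Matrix (Fin n) (Fin n) ℂ,
      x * y₀.val - y₀.val * x = x * y - y * x := by
  have hn' : (n : ℂ) ≠ 0 := Nat.cast_ne_zero.2 hn.ne'
  have h : trace (y - (trace y / n) • (1 : Matrix (Fin n) (Fin n) ℂ)) = 0 := by
    rw [trace_sub, trace_smul, trace_one, Fintype.card_fin, smul_eq_mul, div_mul_cancel₀ _ hn',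
      sub_self]
  refine ⟨⟨_, h⟩, fun x => ?_⟩
  simp only [mul_sub, sub_mul, mul_smul_comm, smul_mul_assoc, mul_one, one_mul]
  abel

theorem exists_finrank_coadStab_add_finrank_zCenter_le {n : ℕ} (hn : 0 < n)
    (e : LieAlgebra.SpecialLinear.sl (Fin n) ℂ)
    (he : IsNilpotent (e : Matrix (Fin n) (Fin n) ℂ)) :
    ∃ ξ : Module.Dual ℂ (centralizer (LieAlgebra.SpecialLinear.sl (Fin n) ℂ) e).normalizer,
      Module.finrank ℂ (coadStab _ ξ) +
        Module.finrank ℂ (zCenter (LieAlgebra.SpecialLinear.sl (Fin n) ℂ) e) + 1 ≤ n := by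
  obtain ⟨m, α, D, hm, hα, hfin, hD, hdc⟩ := exists_functional_of_isNilpotent hn e.val he
  set N := (centralizer (LieAlgebra.SpecialLinear.sl (Fin n) ℂ) e).normalizer
  let ι : N →ₗ[ℂ] Matrix (Fin n) (Fin n) ℂ :=
    (slVal n) ∘ₗ N.toSubmodule.subtype
  have hbr (x y : LieAlgebra.SpecialLinear.sl (Fin n) ℂ) :
      ⁅x, y⁆ = 0 ↔ x.val * y.val = y.val * x.val := by
    rw [← sub_eq_zero (a := x.val * y.val), ← LieAlgebra.SpecialLinear.sl_bracket]
    exact ⟨fun h => by rw [h]; rfl, fun h => Subtype.ext h⟩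
  have hz (z : LieAlgebra.SpecialLinear.sl (Fin n) ℂ)
      (h : z ∈ zCenter (LieAlgebra.SpecialLinear.sl (Fin n) ℂ) e) (y : Matrix (Fin n) (Fin n) ℂ)
      (hy : e.val * y = y * e.val) : z.val * y = y * z.val := by
    obtain ⟨y₀, hy₀⟩ := exists_traceless_part hn y
    rw [← sub_eq_zero, ← hy₀, sub_eq_zero]
    refine (hbr _ _).1 (h.2 _ ((hbr _ _).2 (Eq.symm ?_)))
    rw [← sub_eq_zero, hy₀, sub_eq_zero, hy]
  have hpoly (z : LieAlgebra.SpecialLinear.sl (Fin n) ℂ)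
      (h : z ∈ zCenter (LieAlgebra.SpecialLinear.sl (Fin n) ℂ) e) :
      ∃ p : ℂ[X], z.val = aeval e.val p := hdc _ (hz z h)
  have haeval (p : ℂ[X]) (y : Matrix (Fin n) (Fin n) ℂ) (hy : e.val * y = y * e.val) :
      aeval e.val p * y = y * aeval e.val p := by
    induction p using Polynomial.induction_on' with
    | add p q hp hq => rw [map_add, add_mul, mul_add, hp, hq]
    | monomial k r =>
      have : Commute (e.val ^ k) y := Commute.pow_left hy k
      rw [aeval_monomial, mul_assoc, this.eq, ← mul_assoc, Algebra.commutes, mul_assoc]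
  have hmemN (y : Matrix (Fin n) (Fin n) ℂ) (p : ℂ[X])
      (hy : y * e.val - e.val * y = aeval e.val p) :
      ∃ y₀ : N, ∀ x, x * ι y₀ - ι y₀ * x = x * y - y * x := by
    obtain ⟨y₀, hy₀⟩ := exists_traceless_part hn y
    have h1 : (⁅y₀, e⁆ : LieAlgebra.SpecialLinear.sl (Fin n) ℂ).val = aeval e.val p := by
      rw [LieAlgebra.SpecialLinear.sl_bracket, ← neg_sub, hy₀, neg_sub, hy]
    refine ⟨⟨y₀, mem_normalizer_centralizer_iff.2 ⟨?_, fun x hx => ?_⟩⟩, hy₀⟩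
    · rw [hbr, h1, haeval p _ rfl]
    · rw [hbr, h1, haeval p _ ((hbr _ _).1 hx).symm]
  have hξ (x y : N) : (α ∘ₗ ι) ⁅x, y⁆ = α (ι x * ι y - ι y * ι x) := rfl
  refine ⟨α ∘ₗ ι, ?_⟩
  set ξ := α ∘ₗ ι
  have hcomm (x : N) (hx : x ∈ coadStab _ ξ) : e.val * ι x = ι x * e.val := by
    by_contra hne
    obtain ⟨p, hp⟩ := hpoly _ (mem_normalizer_centralizer_iff.1 x.2)
    have hp' : ι x * e.val - e.val * ι x = aeval e.val p := hp
    obtain ⟨j, c, hc, hj, hjm, h1, -⟩ := exists_lowest_term hn hm (p := p)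
      (by rw [← hp', sub_ne_zero]; exact Ne.symm hne)
      (by rw [← hp', trace_sub, trace_mul_comm, sub_self])
    obtain ⟨y, hy⟩ := hmemN (e.val ^ (m - j + 1)) 0 (by
      rw [← pow_succ, ← pow_succ', sub_self, map_zero])
    have h2 : ξ ⁅x, y⁆ = 0 := hx y
    have h3 : Commute (ι x * e.val - e.val * ι x) e.val := by
      rw [hp']
      exact haeval p _ rfl
    rw [hξ, hy, mul_pow_sub_pow_mul h3, hp', h1, map_nsmul, map_smul] at h2
    exact smul_ne_zero (Nat.succ_ne_zero _) (smul_ne_zero hc hα) h2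
  set C₀ := centralizerStabilizer e.val α ⊓ LinearMap.ker (traceLinearMap (Fin n) ℂ ℂ)
  have hC₀ : Module.finrank ℂ C₀ + 1 ≤ n := by
    refine (Nat.succ_le_of_lt (Submodule.finrank_lt_finrank_of_lt
      (t := centralizerStabilizer e.val α) ?_)).trans hfin
    refine lt_of_le_of_ne inf_le_left fun h => ?_
    have h1 : (1 : Matrix (Fin n) (Fin n) ℂ) ∈ centralizerStabilizer e.val α :=
      ⟨by rw [one_mul, mul_one], fun y _ => by rw [one_mul, mul_one]⟩
    rw [← h] at h1
    have h2 : trace (1 : Matrix (Fin n) (Fin n) ℂ) = 0 := h1.2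
    rw [trace_one, Fintype.card_fin] at h2
    exact hn.ne' (by exact_mod_cast h2)
  have hS : (coadStab _ ξ).map ι ≤ C₀ := by
    rintro _ ⟨x, hx, rfl⟩
    refine ⟨⟨hcomm x hx, fun y hy => ?_⟩, x.1.2⟩
    obtain ⟨y₀, hy₀⟩ := hmemN y 0 (by rw [hy, sub_self, map_zero])
    have h2 : ξ ⁅x, y₀⁆ = 0 := hx y₀
    rwa [hξ, hy₀, map_sub, sub_eq_zero] at h2
  have hZ : (zCenter (LieAlgebra.SpecialLinear.sl (Fin n) ℂ) e).map
      (slVal n) ≤ C₀ := by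
    rintro _ ⟨z, h, rfl⟩
    exact ⟨⟨((hbr _ _).1 h.1).symm, fun y hy => congrArg α (hz z h y hy)⟩, z.2⟩
  have hSZ : (coadStab _ ξ).map ι ⊓ (zCenter (LieAlgebra.SpecialLinear.sl (Fin n) ℂ) e).map
      (slVal n) = ⊥ := by
    rw [eq_bot_iff]
    rintro _ ⟨⟨x, hx, rfl⟩, z, h, hzx⟩
    replace hzx : z.val = ι x := hzx
    obtain ⟨p, hp⟩ := hpoly z h
    rw [Submodule.mem_bot]
    by_contra hne
    obtain ⟨j, c, hc, hj, hjm, -, h1⟩ := exists_lowest_term hn hm (p := p)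
      (by rwa [← hp, hzx]) (by rw [← hp]; exact z.2)
    obtain ⟨y, hy⟩ := hmemN (e.val ^ (m - j) * D) (X ^ (m - j + 1)) (by
      rw [mul_assoc, ← mul_assoc e.val, ← pow_succ', pow_succ, mul_assoc, ← mul_sub, hD, map_pow,
        aeval_X, pow_succ])
    have h2 : ξ ⁅x, y⁆ = 0 := hx y
    have h3 := haeval p (e.val ^ (m - j)) (by rw [← pow_succ, ← pow_succ'])
    rw [hξ, hy, ← hzx, hp, ← mul_assoc, h3, mul_assoc, mul_assoc, ← mul_sub, ← neg_sub,
      mul_aeval_sub_aeval_mul hD, mul_neg,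
      ← haeval (X * derivative p) (e.val ^ (m - j)) (by rw [← pow_succ, ← pow_succ']), h1,
      map_neg, map_smul, neg_eq_zero] at h2
    exact smul_ne_zero (mul_ne_zero (Nat.cast_ne_zero.2 (by omega)) hc) hα h2
  have h1 := Submodule.finrank_sup_add_finrank_inf_eq ((coadStab _ ξ).map ι)
    ((zCenter (LieAlgebra.SpecialLinear.sl (Fin n) ℂ) e).map
      (slVal n))
  have h2 := Submodule.finrank_mono (sup_le hS hZ)
  have hι : Function.Injective ι := fun a b hab => Subtype.ext (Subtype.ext hab)
  rw [hSZ, finrank_bot, add_zero,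
    ← (Submodule.equivMapOfInjective ι hι (coadStab _ ξ)).finrank_eq,
    ← (Submodule.equivMapOfInjective _ (slVal_injective n) (zCenter _ e)).finrank_eq]
    at h1
  omega

/-- For a nilpotent element `e` of `𝔰𝔩(n, ℂ)` (`n ≥ 2`),
`ind 𝔫(𝔤^e) = rk 𝔤 − dim 𝔷(𝔤^e)`, where `rk 𝔰𝔩(n, ℂ) = n − 1`. -/
theorem index_normalizer_centralizer_eq_sl
    (n : ℕ) (hn : 2 ≤ n)
    (e : ↥(LieAlgebra.SpecialLinear.sl (Fin n) ℂ))
    (he : IsNilpotent (LieAlgebra.ad ℂ ↥(LieAlgebra.SpecialLinear.sl (Fin n) ℂ) e)) :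
    (lieIndex ↥((centralizer ↥(LieAlgebra.SpecialLinear.sl (Fin n) ℂ) e).normalizer) : ℤ) =
      ((n : ℤ) - 1) -
        (Module.finrank ℂ ↥(zCenter ↥(LieAlgebra.SpecialLinear.sl (Fin n) ℂ) e) : ℤ) := by
  have hn0 : 0 < n := by omega
  obtain ⟨ξ₀, hξ₀⟩ := exists_finrank_coadStab_add_finrank_zCenter_le hn0 e
    (isNilpotent_of_ad_isNilpotent hn0 e he)
  have hlow (ξ : Module.Dual ℂ
      (centralizer (LieAlgebra.SpecialLinear.sl (Fin n) ℂ) e).normalizer) :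
      n ≤ Module.finrank ℂ (coadStab _ ξ) +
        Module.finrank ℂ (zCenter (LieAlgebra.SpecialLinear.sl (Fin n) ℂ) e) + 1 := by
    obtain ⟨F, hF⟩ := ξ.exists_extend (p :=
      (centralizer (LieAlgebra.SpecialLinear.sl (Fin n) ℂ) e).normalizer.toSubmodule)
    obtain ⟨P, hPn, hP⟩ := exists_stabilizing_subspace e F
    have := le_finrank_coadStab_add_finrank_zCenter e ξ F (LinearMap.congr_fun hF) P hP
    omega
  have hle : lieIndex (centralizer (LieAlgebra.SpecialLinear.sl (Fin n) ℂ) e).normalizer ≤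
      Module.finrank ℂ (coadStab _ ξ₀) := ciInf_le (OrderBot.bddBelow _) ξ₀
  have hge : Module.finrank ℂ (coadStab _ ξ₀) ≤
      lieIndex (centralizer (LieAlgebra.SpecialLinear.sl (Fin n) ℂ) e).normalizer :=
    le_ciInf fun ξ => by
      have := hlow ξ
      omega
  have h0 := hlow ξ₀
  omega
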